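/- Let g be a Lie algebra over a field F of characteristic p > 0, let φ : g × g → F be a 2-cocycle with trivial coefficients, and let h, z ∈ g be elements such that [z, x] = (ad h)ᵖ(x) for all x ∈ g (so z plays the role of the p-th power h^[p] of h in a restricted Lie algebra). Then the F-linear functional ψ : g → F defined by ψ(x) = φ(x, z) − φ((ad h)^{p−1}(x), h) vanishes on all brackets: ψ([x, y]) = 0 for all x, y ∈ g. (This is the statement that the Hochschild map Δ_φ(h)(x) = φ(x, h^[p]) − φ([x, h, …, h], h), with h repeated p − 1 times, defines a class in H¹(g, F).) -/

import Mathlib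

/-!
Let `L` act on `L ⊗ L` through `ρ w = ad w ⊗ 1 + 1 ⊗ ad w`. The bracket `β : L ⊗ L → L` is a
morphism of Lie modules, and if `Φ` is the linear map on `L ⊗ L` induced by `φ`, then the cocycle
identity says `φ(β t, w) = -Φ(ρ w t)`. Hence `φ((ad h)^(p-1) (β t), h) = -Φ((ρ h)^p t)`. In
characteristic `p` the two commuting summands of `ρ h` give
`(ρ h)^p = (ad h)^p ⊗ 1 + 1 ⊗ (ad h)^p = ρ z`, so this value is `-Φ(ρ z t) = φ(β t, z)`.
-/

open LieModule
open scoped TensorProduct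

section TensorAction

variable {R M N : Type*} [CommRing R] [AddCommGroup M] [Module R M] [AddCommGroup N] [Module R N]

theorem rTensor_add_lTensor_pow_char_pow {p : ℕ} [CharP R p] (hp : p.Prime) (n : ℕ)
    (f : Module.End R M) (g : Module.End R N) :
    (f.rTensor N + g.lTensor M) ^ p ^ n = (f ^ p ^ n).rTensor N + (g ^ p ^ n).lTensor M := by
  have hcomm : Commute (f.rTensor N) (g.lTensor M) :=
    (LinearMap.rTensor_comp_lTensor M f g).trans (LinearMap.lTensor_comp_rTensor M f g).symm
  have hp_zero : (p : Module.End R (M ⊗[R] N)) = 0 := by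
    rw [← map_natCast (algebraMap R _), CharP.cast_eq_zero, map_zero]
  obtain ⟨r, hr⟩ := hcomm.exists_add_pow_prime_pow_eq hp n
  rw [hr, hp_zero, LinearMap.rTensor_pow, LinearMap.lTensor_pow]
  simp only [zero_mul, add_zero]

variable {L : Type*} [LieRing L] [LieAlgebra R L]
variable [LieRingModule L M] [LieModule R L M] [LieRingModule L N] [LieModule R L N]

theorem toEnd_tensorProduct (x : L) :
    toEnd R L (M ⊗[R] N) x = (toEnd R L M x).rTensor N + (toEnd R L N x).lTensor M :=
  rfl

theorem toEnd_tensorProduct_eq_pow_char_pow {p : ℕ} [CharP R p] (hp : p.Prime) {n : ℕ} {h z : L}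
    (hM : toEnd R L M z = toEnd R L M h ^ p ^ n) (hN : toEnd R L N z = toEnd R L N h ^ p ^ n) :
    toEnd R L (M ⊗[R] N) z = toEnd R L (M ⊗[R] N) h ^ p ^ n := by
  rw [toEnd_tensorProduct, toEnd_tensorProduct, rTensor_add_lTensor_pow_char_pow hp, hM, hN]

end TensorAction

section Cocycle

variable {R L M : Type*} [CommRing R] [LieRing L] [LieAlgebra R L] [AddCommGroup M] [Module R M]
variable {φ : L →ₗ[R] L →ₗ[R] M}

theorem cocycle_toModuleHom_eq_neg_lift (hskew : ∀ x y, -φ x y = φ y x)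
    (hcoc : ∀ x y w, φ ⁅x, y⁆ w + φ ⁅y, w⁆ x + φ ⁅w, x⁆ y = 0) (t : L ⊗[R] L) (w : L) :
    φ (toModuleHom R L L t) w = -TensorProduct.lift φ ⁅w, t⁆ := by
  induction t with
  | zero => simp
  | add s t hs ht => simp only [map_add, LinearMap.add_apply, lie_add, hs, ht, neg_add]
  | tmul x y =>
    have hyw : φ ⁅y, w⁆ x = φ x ⁅w, y⁆ := by rw [← hskew, ← map_neg, lie_skew]
    rw [toModuleHom_apply, TensorProduct.LieModule.lie_tmul_right, map_add,
      TensorProduct.lift.tmul, TensorProduct.lift.tmul, eq_neg_iff_add_eq_zero, ← hyw,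
      add_comm (φ ⁅w, x⁆ y), ← add_assoc]
    exact hcoc x y w

theorem cocycle_ad_pow_toModuleHom_eq_neg_lift (hskew : ∀ x y, -φ x y = φ y x)
    (hcoc : ∀ x y w, φ ⁅x, y⁆ w + φ ⁅y, w⁆ x + φ ⁅w, x⁆ y = 0) (h : L) (k : ℕ) (t : L ⊗[R] L) :
    φ ((LieAlgebra.ad R L h ^ k) (toModuleHom R L L t)) h =
      -TensorProduct.lift φ ((toEnd R L (L ⊗[R] L) h ^ (k + 1)) t) := by
  rw [LieAlgebra.ad, toEnd_pow_apply_map, cocycle_toModuleHom_eq_neg_lift hskew hcoc, pow_succ',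
    Module.End.mul_apply, toEnd_apply_apply]

theorem hochschild_delta_cocycle_vanishes_on_brackets_general
    {p : ℕ} [CharP R p] (hp : p.Prime) {n : ℕ} (hskew : ∀ x y, -φ x y = φ y x)
    (hcoc : ∀ x y w, φ ⁅x, y⁆ w + φ ⁅y, w⁆ x + φ ⁅w, x⁆ y = 0) {h z : L}
    (hz : LieAlgebra.ad R L z = LieAlgebra.ad R L h ^ p ^ n) (x y : L) :
    φ ⁅x, y⁆ z - φ ((LieAlgebra.ad R L h ^ (p ^ n - 1)) ⁅x, y⁆) h = 0 := by
  have hbracket : ⁅x, y⁆ = toModuleHom R L L (x ⊗ₜ y) := (toModuleHom_apply R L L x y).symm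
  have hz_tensor : toEnd R L (L ⊗[R] L) z = toEnd R L (L ⊗[R] L) h ^ p ^ n :=
    toEnd_tensorProduct_eq_pow_char_pow hp hz hz
  rw [sub_eq_zero, hbracket, cocycle_ad_pow_toModuleHom_eq_neg_lift hskew hcoc,
    Nat.sub_add_cancel (pow_pos hp.pos n), ← hz_tensor, toEnd_apply_apply,
    cocycle_toModuleHom_eq_neg_lift hskew hcoc]

end Cocycle

/-- Let `g` be a Lie algebra over a field `F` of characteristic `p > 0`, let `φ` be a
2-cocycle with trivial coefficients (an alternating bilinear form satisfying the
cocycle identity), and let `h z : g` satisfy `⁅z, x⁆ = (ad h)^p x` for all `x`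
(so `z` plays the role of `h^[p]`). Then the linear functional
`ψ(x) = φ(x, z) − φ((ad h)^(p−1) x, h)` vanishes on all brackets. -/
theorem hochschild_delta_cocycle_vanishes_on_brackets
    {F L : Type*} [Field F] [LieRing L] [LieAlgebra F L]
    (p : ℕ) [CharP F p] (hp : 0 < p)
    (φ : L →ₗ[F] L →ₗ[F] F)
    (halt : ∀ x : L, φ x x = 0)
    (hcoc : ∀ x y w : L, φ ⁅x, y⁆ w + φ ⁅y, w⁆ x + φ ⁅w, x⁆ y = 0)
    (h z : L)
    (hz : ∀ x : L, ⁅z, x⁆ = ((LieAlgebra.ad F L h) ^ p) x) :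
    ∀ x y : L,
      φ ⁅x, y⁆ z - φ (((LieAlgebra.ad F L h) ^ (p - 1)) ⁅x, y⁆) h = 0 := by
  have hprime : p.Prime := (CharP.char_is_prime_or_zero F p).resolve_right hp.ne'
  simpa only [pow_one] using hochschild_delta_cocycle_vanishes_on_brackets_general (n := 1) hprime
    (LinearMap.IsAlt.neg halt) hcoc (by simpa only [pow_one] using LinearMap.ext hz)
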